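/- arXiv:1112.6129 — 7 statements merged into one kernel-verified Lean document; each statement's English description precedes it below -/
import Mathlib

section
/- The formal system CC is consistent: the formula ⊥ (falsehood, definable as (∀x,y)(x ∈ y)) is not derivable in CC. -/
/-!
Deep embedding of Weaver's system CC ("Constructive Concepts").

The language is the first-order language of set theory (∈ and =, variables
only as terms) augmented by a unary operator □.  Formulas use de Bruijn
indices for variables.  ⊥ is the defined formula (∀x,y)(x ∈ y) and ¬A
abbreviates A → ⊥.

CC consists of intuitionistic predicate calculus with equality (presented
in natural-deduction style, with contexts), the modal axiom schemes
(1) A → □A, (2) □(A∧B) ↔ (□A ∧ □B), (3) □(A∨B) ↔ (□A ∨ □B),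
(4) □∃xA ↔ ∃x□A, (5) □∀xA ↔ ∀x□A, (6) □(A→B) → (□A → □B),
the deduction rule inferring A from □A (applicable to theorems, i.e. in
the empty context), the extensionality axiom (7), and the comprehension
scheme (8) (∃x)(∀r)(r ∈ x ↔ □A) with x not free in A.
-/

namespace CC

/-- Formulas of CC; variables are de Bruijn indices. -/
inductive Fm : Type
  | mem : ℕ → ℕ → Fm        -- x ∈ y
  | eq  : ℕ → ℕ → Fm        -- x = y
  | and : Fm → Fm → Fm
  | or  : Fm → Fm → Fm
  | imp : Fm → Fm → Fm
  | all : Fm → Fm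
  | ex  : Fm → Fm
  | box : Fm → Fm
  deriving DecidableEq

namespace Fm

/-- ⊥ stands for (∀x,y)(x ∈ y). -/
def bot : Fm := .all (.all (.mem 1 0))

/-- ¬A abbreviates A → ⊥. -/
def neg (A : Fm) : Fm := A.imp bot

/-- A ↔ B abbreviates (A → B) ∧ (B → A). -/
def iff (A B : Fm) : Fm := (A.imp B).and (B.imp A)

/-- Lift a variable: indices ≥ d are incremented. -/
def liftVar (d n : ℕ) : ℕ := if n < d then n else n + 1

/-- Lift a formula at depth d: free indices ≥ d are incremented. -/
def liftAt (d : ℕ) : Fm → Fm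
  | mem a b => mem (liftVar d a) (liftVar d b)
  | eq a b  => eq (liftVar d a) (liftVar d b)
  | and A B => and (A.liftAt d) (B.liftAt d)
  | or A B  => or (A.liftAt d) (B.liftAt d)
  | imp A B => imp (A.liftAt d) (B.liftAt d)
  | all A   => all (A.liftAt (d+1))
  | ex A    => ex (A.liftAt (d+1))
  | box A   => box (A.liftAt d)

/-- Lift a formula (all free indices incremented). -/
def shift : Fm → Fm := liftAt 0

/-- Substitute variable t for index d (indices above d are lowered). -/
def substVar (d t n : ℕ) : ℕ := if n < d then n else if n = d then t else n - 1

/-- Substitute the variable t for the de Bruijn index d. -/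
def subst (d t : ℕ) : Fm → Fm
  | mem a b => mem (substVar d t a) (substVar d t b)
  | eq a b  => eq (substVar d t a) (substVar d t b)
  | and A B => and (A.subst d t) (B.subst d t)
  | or A B  => or (A.subst d t) (B.subst d t)
  | imp A B => imp (A.subst d t) (B.subst d t)
  | all A   => all (A.subst (d+1) (t+1))
  | ex A    => ex (A.subst (d+1) (t+1))
  | box A   => box (A.subst d t)

end Fm

/-- The extensionality axiom (7): x = y ↔ (∀u)(u ∈ x ↔ u ∈ y)
(universally closed). -/
def extAx : Fm :=
  .all (.all (Fm.iff (.eq 1 0) (.all (Fm.iff (.mem 0 2) (.mem 0 1)))))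

/-- Derivability in CC, from a list of hypotheses.  The rules are those of
intuitionistic natural deduction with equality (with ex falso for the
defined ⊥), the modal axioms (1)–(6), the rule inferring A from □A (for
theorems, i.e. with no hypotheses), extensionality, and comprehension.
In `compr`, the formula `A` has de Bruijn index 0 as the fixed variable r;
lifting at 1 guarantees that the comprehension variable x does not occur
freely in A. -/
inductive Prf : List Fm → Fm → Prop
  | hyp {Γ : List Fm} {A : Fm} : A ∈ Γ → Prf Γ A
  | andI {Γ : List Fm} {A B : Fm} : Prf Γ A → Prf Γ B → Prf Γ (.and A B)
  | andE1 {Γ : List Fm} {A B : Fm} : Prf Γ (.and A B) → Prf Γ A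
  | andE2 {Γ : List Fm} {A B : Fm} : Prf Γ (.and A B) → Prf Γ B
  | orI1 {Γ : List Fm} {A B : Fm} : Prf Γ A → Prf Γ (.or A B)
  | orI2 {Γ : List Fm} {A B : Fm} : Prf Γ B → Prf Γ (.or A B)
  | orE {Γ : List Fm} {A B C : Fm} : Prf Γ (.or A B) → Prf (A :: Γ) C → Prf (B :: Γ) C → Prf Γ C
  | impI {Γ : List Fm} {A B : Fm} : Prf (A :: Γ) B → Prf Γ (.imp A B)
  | impE {Γ : List Fm} {A B : Fm} : Prf Γ (.imp A B) → Prf Γ A → Prf Γ B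
  | exfalso {Γ : List Fm} {A : Fm} : Prf Γ Fm.bot → Prf Γ A
  | allI {Γ : List Fm} {A : Fm} : Prf (Γ.map Fm.shift) A → Prf Γ (.all A)
  | allE {Γ : List Fm} {A : Fm} (t : ℕ) : Prf Γ (.all A) → Prf Γ (A.subst 0 t)
  | exI {Γ : List Fm} {A : Fm} (t : ℕ) : Prf Γ (A.subst 0 t) → Prf Γ (.ex A)
  | exE {Γ : List Fm} {A B : Fm} : Prf Γ (.ex A) → Prf (A :: Γ.map Fm.shift) B.shift → Prf Γ B
  | refl {Γ : List Fm} (t : ℕ) : Prf Γ (.eq t t)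
  | eqSubst {Γ : List Fm} {A : Fm} (s t : ℕ) :
      Prf Γ (.eq s t) → Prf Γ (A.subst 0 s) → Prf Γ (A.subst 0 t)
  | ax1 {Γ : List Fm} {A : Fm} : Prf Γ (A.imp (.box A))
  | ax2 {Γ : List Fm} {A B : Fm} : Prf Γ (Fm.iff (.box (.and A B)) (.and (.box A) (.box B)))
  | ax3 {Γ : List Fm} {A B : Fm} : Prf Γ (Fm.iff (.box (.or A B)) (.or (.box A) (.box B)))
  | ax4 {Γ : List Fm} {A : Fm} : Prf Γ (Fm.iff (.box (.ex A)) (.ex (.box A)))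
  | ax5 {Γ : List Fm} {A : Fm} : Prf Γ (Fm.iff (.box (.all A)) (.all (.box A)))
  | ax6 {Γ : List Fm} {A B : Fm} : Prf Γ ((Fm.box (A.imp B)).imp ((Fm.box A).imp (.box B)))
  | boxE {A : Fm} : Prf [] (.box A) → Prf [] A
  | ext {Γ : List Fm} : Prf Γ extAx
  | compr {Γ : List Fm} (A : Fm) :
      Prf Γ (.ex (.all (Fm.iff (.mem 0 1) (.box (A.liftAt 1)))))

/-!
Consistency is proved by a Kripke model over the worlds `0, 1, 2, …`, in which a formula forced at
`n + 1` is forced at `n`, and `□A` holds at `n + 1` iff `A` holds at `n` (and always at `0`).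
Membership at world `n + 1` depends only on the restriction of the element to world `n`, which makes
room for comprehension; an empty set at each world refutes `⊥`.
-/

/-- A domain of sets together with a membership relation. -/
structure Stage : Type 1 where
  /-- The underlying type of sets. -/
  Carrier : Type
  /-- `Mem u x` says that `u` is a member of `x`. -/
  Mem : Carrier → Carrier → Prop

/-- A set at the next stage is a set of the present stage together with a subset of its members,
to which membership at the next stage refers. -/
def Stage.next (S : Stage) : Stage where
  Carrier := {p : S.Carrier × Set S.Carrier // ∀ u ∈ p.2, S.Mem u p.1}
  Mem u x := u.1.1 ∈ x.1.2

/-- The stage at world `n`; at world `0` a set has either all sets as members or none. -/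
def stage : ℕ → Stage
  | 0 => ⟨Prop, fun _ x => x⟩
  | n + 1 => (stage n).next

/-- The domain of quantification at world `n`. -/
abbrev Dom (n : ℕ) : Type := (stage n).Carrier

/-- Membership at world `n`. -/
abbrev Mem (n : ℕ) : Dom n → Dom n → Prop := (stage n).Mem

/-- Restriction of a set to the preceding world. -/
def res {n : ℕ} (x : Dom (n + 1)) : Dom n := Subtype.val x |>.1

/-- The members, as sets of world `n`, of a set of world `n + 1`. -/
def members {n : ℕ} (x : Dom (n + 1)) : Set (Dom n) := Subtype.val x |>.2

/-- The set of world `n + 1` with given restriction and given members. -/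
def mkDom {n : ℕ} (x : Dom n) (s : Set (Dom n)) (h : ∀ u ∈ s, Mem n u x) : Dom (n + 1) :=
  Subtype.mk (x, s) h

theorem mem_res {n : ℕ} {u x : Dom (n + 1)} (h : Mem (n + 1) u x) : Mem n (res u) (res x) :=
  Subtype.property x _ h

theorem dom_ext {n : ℕ} {x y : Dom (n + 1)} (h : res x = res y) (h' : members x = members y) :
    x = y :=
  Subtype.ext (Prod.ext h h')

theorem res_surjective {n : ℕ} : Function.Surjective (res : Dom (n + 1) → Dom n) :=
  fun x => ⟨mkDom x ∅ (by simp), rfl⟩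

theorem exists_empty : ∀ n : ℕ, ∃ x : Dom n, ∀ u, ¬ Mem n u x
  | 0 => ⟨False, fun _ h => h⟩
  | n + 1 =>
    have ⟨x, _⟩ := exists_empty n
    ⟨mkDom x ∅ (by simp), fun _ h => h⟩

/-- Extend an assignment by a value for the index `0`. -/
def cons {α : Type*} (x : α) (v : ℕ → α) : ℕ → α
  | 0 => x
  | k + 1 => v k

@[simp] theorem cons_zero {α : Type*} (x : α) (v : ℕ → α) : cons x v 0 = x := rfl

theorem comp_cons {α β : Type*} (f : α → β) (x : α) (v : ℕ → α) :
    f ∘ cons x v = cons (f x) (f ∘ v) := by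
  funext k; cases k <;> rfl

theorem cons_comp_liftVar {α : Type*} (d : ℕ) (x : α) (v : ℕ → α) :
    cons x v ∘ Fm.liftVar (d + 1) = cons x (v ∘ Fm.liftVar d) := by
  funext k
  rcases k with _ | k
  · simp [Fm.liftVar]
  · by_cases h : k < d <;> simp [Fm.liftVar, h, cons]

theorem cons_comp_substVar {α : Type*} (d t : ℕ) (x : α) (v : ℕ → α) :
    cons x v ∘ Fm.substVar (d + 1) (t + 1) = cons x (v ∘ Fm.substVar d t) := by
  funext k
  rcases k with _ | k
  · simp [Fm.substVar]
  · by_cases h : k < d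
    · simp [Fm.substVar, h, cons]
    · by_cases h' : k = d
      · simp [Fm.substVar, h', cons]
      · obtain ⟨j, rfl⟩ : ∃ j, k = j + 1 := ⟨k - 1, by omega⟩
        simp [Fm.substVar, h, h', cons]

theorem cons_comp_liftVar_zero {α : Type*} (x : α) (v : ℕ → α) :
    cons x v ∘ Fm.liftVar 0 = v := by
  funext k; simp [Fm.liftVar, cons]

theorem comp_substVar_zero {α : Type*} (t : ℕ) (v : ℕ → α) :
    v ∘ Fm.substVar 0 t = cons (v t) v := by
  funext k; cases k <;> simp [Fm.substVar, cons]

/-- Evaluation of formulas at one world, `later A v` being the truth value of `A` at the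
preceding world. -/
def interp (S : Stage) (later : Fm → (ℕ → S.Carrier) → Prop) : Fm → (ℕ → S.Carrier) → Prop
  | .mem a b, v => S.Mem (v a) (v b)
  | .eq a b, v => v a = v b
  | .and A B, v => interp S later A v ∧ interp S later B v
  | .or A B, v => interp S later A v ∨ interp S later B v
  | .imp A B, v => (interp S later A v → interp S later B v) ∧ later (.imp A B) v
  | .all A, v => ∀ x, interp S later A (cons x v)
  | .ex A, v => ∃ x, interp S later A (cons x v)
  | .box A, v => later A v

/-- `Force n A v`: the formula `A` is forced at world `n` under the assignment `v`. -/
def Force : (n : ℕ) → Fm → (ℕ → Dom n) → Prop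
  | 0 => interp (stage 0) fun _ _ => True
  | n + 1 => interp (stage (n + 1)) fun A v => Force n A (res ∘ v)

/-- `Later n A v`: the formula `A` is forced at the world preceding `n`, if there is one. -/
def Later : (n : ℕ) → Fm → (ℕ → Dom n) → Prop
  | 0, _, _ => True
  | n + 1, A, v => Force n A (res ∘ v)

section Unfold

variable {n : ℕ} {A B : Fm} {v : ℕ → Dom n}

theorem force_mem {a b : ℕ} : Force n (.mem a b) v ↔ Mem n (v a) (v b) := by cases n <;> rfl

theorem force_eq {a b : ℕ} : Force n (.eq a b) v ↔ v a = v b := by cases n <;> rfl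

theorem force_and : Force n (.and A B) v ↔ Force n A v ∧ Force n B v := by cases n <;> rfl

theorem force_or : Force n (.or A B) v ↔ Force n A v ∨ Force n B v := by cases n <;> rfl

theorem force_imp :
    Force n (.imp A B) v ↔ (Force n A v → Force n B v) ∧ Later n (.imp A B) v := by
  cases n <;> rfl

theorem force_all : Force n (.all A) v ↔ ∀ x, Force n A (cons x v) := by cases n <;> rfl

theorem force_ex : Force n (.ex A) v ↔ ∃ x, Force n A (cons x v) := by cases n <;> rfl

theorem force_box : Force n (.box A) v ↔ Later n A v := by cases n <;> rfl

theorem force_iff :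
    Force n (Fm.iff A B) v ↔ Force n (A.imp B) v ∧ Force n (B.imp A) v := force_and

end Unfold

theorem force_res {A : Fm} : ∀ {n : ℕ} {v : ℕ → Dom (n + 1)}, Force (n + 1) A v →
    Force n A (res ∘ v) := by
  induction A with
  | mem a b => intro n v; simp only [force_mem]; exact mem_res
  | eq a b => intro n v; simp only [force_eq]; exact congrArg res
  | and A B ihA ihB => intro n v; simp only [force_and]; exact And.imp ihA ihB
  | or A B ihA ihB => intro n v; simp only [force_or]; exact Or.imp ihA ihB
  | imp A B _ _ => intro n v h; exact (force_imp.1 h).2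
  | all A ih =>
    intro n v h
    refine force_all.2 fun x => ?_
    obtain ⟨x, rfl⟩ := res_surjective x
    rw [← comp_cons]
    exact ih (force_all.1 h x)
  | ex A ih =>
    intro n v h
    obtain ⟨x, hx⟩ := force_ex.1 h
    refine force_ex.2 ⟨res x, ?_⟩
    rw [← comp_cons]
    exact ih hx
  | box A ih =>
    intro n v h
    have h := force_box.1 h
    cases n with
    | zero => trivial
    | succ n => exact force_box.2 (ih h)

theorem Force.later {A : Fm} {n : ℕ} {v : ℕ → Dom n} (h : Force n A v) : Later n A v := by
  cases n with
  | zero => trivial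
  | succ n => exact force_res h

/-- An implication is forced as soon as it holds at all worlds under a persistent hypothesis. -/
theorem force_imp_of_persistent {A B : Fm} (P : (n : ℕ) → (ℕ → Dom n) → Prop)
    (hP : ∀ n v, P (n + 1) v → P n (res ∘ v))
    (h : ∀ n v, P n v → Force n A v → Force n B v) :
    ∀ n v, P n v → Force n (A.imp B) v := by
  intro n
  induction n with
  | zero => exact fun v hv => force_imp.2 ⟨h 0 v hv, trivial⟩
  | succ n ih => exact fun v hv => force_imp.2 ⟨h _ v hv, ih _ (hP n v hv)⟩

theorem force_imp_of_forall {A B : Fm} (h : ∀ n v, Force n A v → Force n B v) (n : ℕ)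
    (v : ℕ → Dom n) : Force n (A.imp B) v :=
  force_imp_of_persistent (fun _ _ => True) (fun _ _ _ => trivial) (fun n v _ => h n v) n v trivial

theorem force_iff_of_forall {A B : Fm} (h : ∀ n v, Force n A v ↔ Force n B v) (n : ℕ)
    (v : ℕ → Dom n) : Force n (Fm.iff A B) v :=
  force_iff.2 ⟨force_imp_of_forall (fun n v => (h n v).1) n v,
    force_imp_of_forall (fun n v => (h n v).2) n v⟩

theorem Force.mp {A B : Fm} {n : ℕ} {v : ℕ → Dom n} (h : Force n (A.imp B) v)
    (hA : Force n A v) : Force n B v :=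
  (force_imp.1 h).1 hA

theorem interp_liftAt {S : Stage} {later : Fm → (ℕ → S.Carrier) → Prop}
    (hl : ∀ (A : Fm) (d : ℕ) (v : ℕ → S.Carrier),
      later (A.liftAt d) v ↔ later A (v ∘ Fm.liftVar d)) (A : Fm) :
    ∀ (d : ℕ) (v : ℕ → S.Carrier),
      interp S later (A.liftAt d) v ↔ interp S later A (v ∘ Fm.liftVar d) := by
  induction A with
  | mem | eq => intros; rfl
  | and A B ihA ihB | or A B ihA ihB => intros; simp only [Fm.liftAt, interp, ihA, ihB]
  | imp A B ihA ihB => intros; simp only [Fm.liftAt, interp, ihA, ihB, ← hl]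
  | all A ih | ex A ih => intros; simp only [Fm.liftAt, interp, ih, cons_comp_liftVar]
  | box A ih => intros; exact hl ..

theorem force_liftAt : ∀ {n : ℕ} {A : Fm} {d : ℕ} {v : ℕ → Dom n},
    Force n (A.liftAt d) v ↔ Force n A (v ∘ Fm.liftVar d)
  | 0, _, _, _ => interp_liftAt (fun _ _ _ => Iff.rfl) ..
  | n + 1, _, _, _ =>
    interp_liftAt (S := stage (n + 1)) (later := Later (n + 1)) (fun _ _ _ => force_liftAt) ..

theorem interp_subst {S : Stage} {later : Fm → (ℕ → S.Carrier) → Prop}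
    (hl : ∀ (A : Fm) (d t : ℕ) (v : ℕ → S.Carrier),
      later (A.subst d t) v ↔ later A (v ∘ Fm.substVar d t)) (A : Fm) :
    ∀ (d t : ℕ) (v : ℕ → S.Carrier),
      interp S later (A.subst d t) v ↔ interp S later A (v ∘ Fm.substVar d t) := by
  induction A with
  | mem | eq => intros; rfl
  | and A B ihA ihB | or A B ihA ihB => intros; simp only [Fm.subst, interp, ihA, ihB]
  | imp A B ihA ihB => intros; simp only [Fm.subst, interp, ihA, ihB, ← hl]
  | all A ih | ex A ih => intros; simp only [Fm.subst, interp, ih, cons_comp_substVar]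
  | box A ih => intros; exact hl ..

theorem force_subst : ∀ {n : ℕ} {A : Fm} {d t : ℕ} {v : ℕ → Dom n},
    Force n (A.subst d t) v ↔ Force n A (v ∘ Fm.substVar d t)
  | 0, _, _, _, _ => interp_subst (fun _ _ _ _ => Iff.rfl) ..
  | n + 1, _, _, _, _ =>
    interp_subst (S := stage (n + 1)) (later := Later (n + 1)) (fun _ _ _ _ => force_subst) ..

theorem force_shift {n : ℕ} {A : Fm} {x : Dom n} {v : ℕ → Dom n} :
    Force n A.shift (cons x v) ↔ Force n A v := by
  rw [Fm.shift, force_liftAt, cons_comp_liftVar_zero]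

theorem force_subst_zero {n : ℕ} {A : Fm} {t : ℕ} {v : ℕ → Dom n} :
    Force n (A.subst 0 t) v ↔ Force n A (cons (v t) v) := by
  rw [force_subst, comp_substVar_zero]

theorem not_force_bot {n : ℕ} {v : ℕ → Dom n} : ¬ Force n Fm.bot v := by
  intro h
  obtain ⟨x, hx⟩ := exists_empty n
  exact hx x (force_mem.1 (force_all.1 (force_all.1 h x) x))

theorem eq_of_force_same_members : ∀ {n : ℕ} {v : ℕ → Dom n},
    Force n (.all (Fm.iff (.mem 0 2) (.mem 0 1))) v → v 1 = v 0
  | 0, v, h => by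
    have h := force_iff.1 (force_all.1 h (v 0))
    exact propext ⟨fun hu => h.1.mp hu, fun hu => h.2.mp hu⟩
  | n + 1, v, h => by
    refine dom_ext (eq_of_force_same_members (force_res h)) (Set.ext fun u => ?_)
    obtain ⟨u, rfl⟩ := res_surjective u
    have h := force_iff.1 (force_all.1 h u)
    exact ⟨fun hu => force_mem.1 (h.1.mp (force_mem.2 hu)),
      fun hu => force_mem.1 (h.2.mp (force_mem.2 hu))⟩

theorem force_extAx {n : ℕ} {v : ℕ → Dom n} : Force n extAx v := by
  refine force_all.2 fun x => force_all.2 fun y => force_iff_of_forall (fun n v => ?_) n _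
  refine ⟨fun h => force_all.2 fun u => ?_,
    fun h => force_eq.2 (eq_of_force_same_members h)⟩
  refine force_iff.2 ⟨?_, ?_⟩
  · refine force_imp_of_persistent (fun _ v => v 2 = v 1) (fun _ _ h => congrArg res h)
      (fun n v hv h => ?_) n _ (force_eq (v := v).1 h)
    rw [force_mem] at h ⊢
    rwa [← hv]
  · refine force_imp_of_persistent (fun _ v => v 2 = v 1) (fun _ _ h => congrArg res h)
      (fun n v hv h => ?_) n _ (force_eq (v := v).1 h)
    rw [force_mem] at h ⊢
    rwa [hv]

/-- The sets defined by `□A` at world `n`, with a lower bound on their members. -/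
def comprAux (A : Fm) : (n : ℕ) → (v : ℕ → Dom n) →
    {x : Dom n // ∀ u, Later n A (cons u v) → Mem n u x}
  | 0, _ => ⟨True, fun _ _ => trivial⟩
  | n + 1, v =>
    ⟨mkDom (comprAux A n (res ∘ v)).1 {u | Force n A (cons u (res ∘ v))}
      fun u hu => (comprAux A n (res ∘ v)).2 u hu.later,
      fun u hu => by rwa [Later, comp_cons] at hu⟩

/-- The set of all `r` such that `□A`, where `r` is the variable with index `0`. -/
def comprSet (A : Fm) (n : ℕ) (v : ℕ → Dom n) : Dom n := (comprAux A n v).1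

theorem res_comprSet (A : Fm) (n : ℕ) (v : ℕ → Dom (n + 1)) :
    res (comprSet A (n + 1) v) = comprSet A n (res ∘ v) := rfl

theorem mem_comprSet {A : Fm} {n : ℕ} {u : Dom n} {v : ℕ → Dom n} :
    Mem n u (comprSet A n v) ↔ Later n A (cons u v) := by
  refine ⟨fun h => ?_, (comprAux A n v).2 u⟩
  cases n with
  | zero => trivial
  | succ n => rw [Later, comp_cons]; exact h

theorem force_compr {n : ℕ} {v : ℕ → Dom n} (A : Fm) :
    Force n (.ex (.all (Fm.iff (.mem 0 1) (.box (A.liftAt 1))))) v := by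
  refine force_ex.2 ⟨comprSet A n v, force_all.2 fun u => ?_⟩
  let P : (n : ℕ) → (ℕ → Dom n) → Prop := fun n w =>
    ∃ u v, w = cons u (cons (comprSet A n v) v)
  have hP : ∀ n w, P (n + 1) w → P n (res ∘ w) := by
    rintro n _ ⟨u, v, rfl⟩
    exact ⟨res u, res ∘ v, by rw [comp_cons, comp_cons, res_comprSet]⟩
  have key : ∀ n w, P n w → (Force n (.mem 0 1) w ↔ Force n (.box (A.liftAt 1)) w) := by
    rintro n _ ⟨u, v, rfl⟩
    have lift : Fm.box (A.liftAt 1) = (Fm.box A).liftAt 1 := rfl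
    rw [force_mem, lift, force_liftAt, cons_comp_liftVar, cons_comp_liftVar_zero, force_box]
    exact mem_comprSet
  exact force_iff.2
    ⟨force_imp_of_persistent P hP (fun n w hw => (key n w hw).1) n _ ⟨u, v, rfl⟩,
      force_imp_of_persistent P hP (fun n w hw => (key n w hw).2) n _ ⟨u, v, rfl⟩⟩

theorem force_map_shift {Γ : List Fm} {n : ℕ} {x : Dom n} {v : ℕ → Dom n}
    (h : ∀ B ∈ Γ, Force n B v) : ∀ B ∈ Γ.map Fm.shift, Force n B (cons x v) := by
  intro B hB
  obtain ⟨C, hC, rfl⟩ := List.mem_map.1 hB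
  exact force_shift.2 (h C hC)

theorem Prf.force {Γ : List Fm} {A : Fm} (h : Prf Γ A) :
    ∀ (n : ℕ) (v : ℕ → Dom n), (∀ B ∈ Γ, Force n B v) → Force n A v := by
  induction h with
  | hyp hA => exact fun n v hΓ => hΓ _ hA
  | andI _ _ ihA ihB => exact fun n v hΓ => force_and.2 ⟨ihA n v hΓ, ihB n v hΓ⟩
  | andE1 _ ih => exact fun n v hΓ => (force_and.1 (ih n v hΓ)).1
  | andE2 _ ih => exact fun n v hΓ => (force_and.1 (ih n v hΓ)).2
  | orI1 _ ih => exact fun n v hΓ => force_or.2 (.inl (ih n v hΓ))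
  | orI2 _ ih => exact fun n v hΓ => force_or.2 (.inr (ih n v hΓ))
  | orE _ _ _ ih ihA ihB =>
    exact fun n v hΓ => (force_or.1 (ih n v hΓ)).elim
      (fun h => ihA n v (List.forall_mem_cons.2 ⟨h, hΓ⟩))
      (fun h => ihB n v (List.forall_mem_cons.2 ⟨h, hΓ⟩))
  | @impI Γ _ _ _ ih =>
    exact force_imp_of_persistent (fun n v => ∀ B ∈ Γ, Force n B v)
      (fun n v h B hB => force_res (h B hB))
      (fun n v hΓ h => ih n v (List.forall_mem_cons.2 ⟨h, hΓ⟩))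
  | impE _ _ ih ihA => exact fun n v hΓ => (ih n v hΓ).mp (ihA n v hΓ)
  | exfalso _ ih => exact fun n v hΓ => (not_force_bot (ih n v hΓ)).elim
  | allI _ ih => exact fun n v hΓ => force_all.2 fun x => ih n _ (force_map_shift hΓ)
  | allE t _ ih => exact fun n v hΓ => force_subst_zero.2 (force_all.1 (ih n v hΓ) _)
  | exI t _ ih => exact fun n v hΓ => force_ex.2 ⟨_, force_subst_zero.1 (ih n v hΓ)⟩
  | exE _ _ ih ihB =>
    intro n v hΓ
    obtain ⟨x, hx⟩ := force_ex.1 (ih n v hΓ)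
    exact force_shift.1 (ihB n (cons x v) (List.forall_mem_cons.2 ⟨hx, force_map_shift hΓ⟩))
  | refl t => exact fun n v _ => force_eq.2 rfl
  | eqSubst s t _ _ ih ihA =>
    intro n v hΓ
    have hA := force_subst_zero.1 (ihA n v hΓ)
    rw [force_eq.1 (ih n v hΓ)] at hA
    exact force_subst_zero.2 hA
  | ax1 =>
    exact fun n v _ => force_imp_of_forall (fun _ _ h => force_box.2 h.later) n v
  | ax2 =>
    refine fun n v _ => force_iff_of_forall (fun n v => ?_) n v
    cases n <;> simp only [force_and, force_box, Later, and_self]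
  | ax3 =>
    refine fun n v _ => force_iff_of_forall (fun n v => ?_) n v
    cases n <;> simp only [force_or, force_box, Later, or_self]
  | ax4 =>
    refine fun n v _ => force_iff_of_forall (fun n v => ?_) n v
    cases n with
    | zero =>
      obtain ⟨x, _⟩ := exists_empty 0
      exact iff_of_true (force_box.2 trivial) (force_ex.2 ⟨x, force_box.2 trivial⟩)
    | succ n =>
      rw [force_box, Later, force_ex, res_surjective.exists]
      simp only [force_ex, force_box, Later, comp_cons]
  | ax5 =>
    refine fun n v _ => force_iff_of_forall (fun n v => ?_) n v
    cases n with
    | zero => simp only [force_all, force_box, Later, implies_true]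
    | succ n =>
      rw [force_box, Later, force_all, res_surjective.forall]
      simp only [force_all, force_box, Later, comp_cons]
  | @ax6 _ A B =>
    refine fun n v _ => force_imp_of_forall (fun n v h => ?_) n v
    refine force_imp_of_persistent (fun n v => Force n (.box (A.imp B)) v)
      (fun n v h => force_res h) (fun n v h hA => ?_) n v h
    rw [force_box] at h hA ⊢
    cases n with
    | zero => trivial
    | succ n => exact Force.mp h hA
  | boxE _ ih =>
    intro n v _
    obtain ⟨w, rfl⟩ := res_surjective.comp_left v
    exact force_box.1 (ih (n + 1) w (by simp))
  | ext => exact fun n v _ => force_extAx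
  | compr A => exact fun n v _ => force_compr A

/-- **Theorem 5.1 (Weaver).**  CC is consistent: the formula ⊥,
that is (∀x,y)(x ∈ y), is not derivable in CC. -/
theorem CC_consistent : ¬ Prf [] Fm.bot :=
  fun h => not_force_bot (h.force 0 (fun _ => True) (by simp))

end CC
end

section
/- In CC, one can derive the existence of the Russell-style concept R satisfying (∀r)(r ∈ R ↔ □(r ∉ r)) (an instance of the comprehension scheme), and for any such R the formula ¬(R ∉ R) is derivable: assuming R ∉ R yields □(R ∉ R) by axiom (1), hence R ∈ R by the defining property of R, a contradiction. Formally, CC proves (∃x)[(∀r)(r ∈ x ↔ □(r ∉ r)) ∧ ¬¬(x ∈ x)]. -/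
/-!
Deep embedding of Weaver's system CC ("Constructive Concepts").

The language is the first-order language of set theory (∈ and =, variables
only as terms) augmented by a unary operator □.  Formulas use de Bruijn
indices for variables.  ⊥ is the defined formula (∀x,y)(x ∈ y) and ¬A
abbreviates A → ⊥.

CC consists of intuitionistic predicate calculus with equality (presented
in natural-deduction style, with contexts), the modal axiom schemes
(1) A → □A, (2) □(A∧B) ↔ (□A ∧ □B), (3) □(A∨B) ↔ (□A ∨ □B),
(4) □∃xA ↔ ∃x□A, (5) □∀xA ↔ ∀x□A, (6) □(A→B) → (□A → □B),
the deduction rule inferring A from □A (applicable to theorems, i.e. in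
the empty context), the extensionality axiom (7), and the comprehension
scheme (8) (∃x)(∀r)(r ∈ x ↔ □A) with x not free in A.
-/

namespace CC

/-- CC proves the existence of the Russell-style concept R
with (∀r)(r ∈ R ↔ □(r ∉ r)), and for it ¬(R ∉ R), i.e. ¬¬(R ∈ R), is
derivable.  Formally: CC proves (∃x)[(∀r)(r ∈ x ↔ □(r ∉ r)) ∧ ¬¬(x ∈ x)].
(Here ¬A is A → ⊥ with ⊥ = (∀x,y)(x ∈ y), and r ∉ r is ¬(r ∈ r).) -/
theorem russell_not_not_self_membership :
    Prf [] (.ex (.and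
      (.all (Fm.iff (.mem 0 1) (.box (Fm.neg (.mem 0 0)))))
      (Fm.neg (Fm.neg (.mem 0 0))))) := by
  refine .exE (.compr (Fm.neg (.mem 0 0))) (.exI 0 (.andI (.hyp ?_) (.impI ?_)))
  · exact List.mem_singleton.mpr rfl
  · have self_not_mem : Prf [Fm.neg (.mem 0 0),
        .all (Fm.iff (.mem 0 1) (.box (Fm.neg (.mem 0 0))))] (Fm.neg (.mem 0 0)) :=
      .hyp List.mem_cons_self
    have self_mem_iff : Prf [Fm.neg (.mem 0 0),
        .all (Fm.iff (.mem 0 1) (.box (Fm.neg (.mem 0 0))))]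
        (Fm.iff (.mem 0 0) (.box (Fm.neg (.mem 0 0)))) :=
      .allE (A := Fm.iff (.mem 0 1) (.box (Fm.neg (.mem 0 0)))) 0
        (.hyp (List.mem_cons_of_mem _ List.mem_cons_self))
    exact .impE self_not_mem (.impE (.andE2 self_mem_iff) (.impE .ax1 self_not_mem))

end CC
end

section
/- In CC, for the Russell-style concept R satisfying (∀r)(r ∈ R ↔ □(r ∉ r)), the formula R ∈ R → □⊥ is derivable: assuming R ∈ R immediately yields □(R ∉ R) by the defining property of R, while R ∈ R also yields □(R ∈ R) by axiom (1), whence □⊥ by axioms (2) and (6). Formally, CC proves (∃x)[(∀r)(r ∈ x ↔ □(r ∉ r)) ∧ (x ∈ x → □⊥)]. -/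
/-!
Deep embedding of Weaver's system CC ("Constructive Concepts").

The language is the first-order language of set theory (∈ and =, variables
only as terms) augmented by a unary operator □.  Formulas use de Bruijn
indices for variables.  ⊥ is the defined formula (∀x,y)(x ∈ y) and ¬A
abbreviates A → ⊥.

CC consists of intuitionistic predicate calculus with equality (presented
in natural-deduction style, with contexts), the modal axiom schemes
(1) A → □A, (2) □(A∧B) ↔ (□A ∧ □B), (3) □(A∨B) ↔ (□A ∨ □B),
(4) □∃xA ↔ ∃x□A, (5) □∀xA ↔ ∀x□A, (6) □(A→B) → (□A → □B),
the deduction rule inferring A from □A (applicable to theorems, i.e. in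
the empty context), the extensionality axiom (7), and the comprehension
scheme (8) (∃x)(∀r)(r ∈ x ↔ □A) with x not free in A.
-/

namespace CC

/-- Whatever is both provable and provably refutable makes `⊥` provable. -/
theorem Prf.box_bot {Γ : List Fm} {A : Fm} (hA : Prf Γ (.box A)) (hn : Prf Γ (.box A.neg)) :
    Prf Γ (.box Fm.bot) :=
  .impE (.impE .ax6 hn) hA

/-- If `R` is the concept of all `r` with `□(r ∉ r)`, then `R ∈ R → □⊥`. -/
theorem Prf.russell_imp_box_bot {Γ : List Fm}
    (hR : Fm.all (Fm.iff (.mem 0 1) (.box (Fm.neg (.mem 0 0)))) ∈ Γ) :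
    Prf Γ ((Fm.mem 0 0).imp (.box Fm.bot)) := by
  have hself : Prf (.mem 0 0 :: Γ) (.mem 0 0) := .hyp List.mem_cons_self
  have hdef : Prf (.mem 0 0 :: Γ) (Fm.iff (.mem 0 0) (.box (Fm.neg (.mem 0 0)))) :=
    .allE 0 (.hyp (List.mem_cons_of_mem _ hR))
  exact .impI (.box_bot (.impE .ax1 hself) (.impE (.andE1 hdef) hself))

/-- CC proves, for the Russell-style concept R with
(∀r)(r ∈ R ↔ □(r ∉ r)), the formula R ∈ R → □⊥.  Formally: CC proves
(∃x)[(∀r)(r ∈ x ↔ □(r ∉ r)) ∧ (x ∈ x → □⊥)].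
(Here ¬A is A → ⊥ with ⊥ = (∀x,y)(x ∈ y), and r ∉ r is ¬(r ∈ r).) -/
theorem russell_self_membership_weakly_false :
    Prf [] (.ex (.and
      (.all (Fm.iff (.mem 0 1) (.box (Fm.neg (.mem 0 0)))))
      ((Fm.mem 0 0).imp (.box Fm.bot)))) := by
  refine .exE (.compr (Fm.neg (.mem 0 0))) (.exI 0 ?_)
  exact .andI (.hyp List.mem_cons_self) (.russell_imp_box_bot List.mem_cons_self)

end CC
end

section
/- The formula (∃x,y)(x = y → □⊥) is provable in CC. -/
/-!
Deep embedding of Weaver's system CC ("Constructive Concepts").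

The language is the first-order language of set theory (∈ and =, variables
only as terms) augmented by a unary operator □.  Formulas use de Bruijn
indices for variables.  ⊥ is the defined formula (∀x,y)(x ∈ y) and ¬A
abbreviates A → ⊥.

CC consists of intuitionistic predicate calculus with equality (presented
in natural-deduction style, with contexts), the modal axiom schemes
(1) A → □A, (2) □(A∧B) ↔ (□A ∧ □B), (3) □(A∨B) ↔ (□A ∨ □B),
(4) □∃xA ↔ ∃x□A, (5) □∀xA ↔ ∀x□A, (6) □(A→B) → (□A → □B),
the deduction rule inferring A from □A (applicable to theorems, i.e. in
the empty context), the extensionality axiom (7), and the comprehension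
scheme (8) (∃x)(∀r)(r ∈ x ↔ □A) with x not free in A.
-/

namespace CC

/-- The formula (∃x,y)(x = y → □⊥) is provable in CC
(here ⊥ stands for (∀x,y)(x ∈ y)). -/
theorem exists_pair_eq_imp_box_bot :
    Prf [] (.ex (.ex ((Fm.eq 1 0).imp (.box Fm.bot)))) := by
  -- The universe `{r | □(r = r)}` and the set `{r | □⊥}` are such a pair.
  refine .exE (.compr (.eq 0 0)) (.exE (.compr Fm.bot) (.exI 1 (.exI 0 (.impI ?_))))
  let emptyDef : Fm := .all (.iff (.mem 0 1) (.box Fm.bot))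
  let univDef : Fm := .all (.iff (.mem 0 2) (.box (.eq 0 0)))
  change Prf [.eq 1 0, emptyDef, univDef] (.box Fm.bot)
  have mem_univ_iff : Prf [.eq 1 0, emptyDef, univDef] (.iff (.mem 0 1) (.box (.eq 0 0))) :=
    .allE (A := .iff (.mem 0 2) (.box (.eq 0 0))) 0 (.hyp (by simp [univDef]))
  have mem_empty_iff : Prf [.eq 1 0, emptyDef, univDef] (.iff (.mem 0 0) (.box Fm.bot)) :=
    .allE (A := .iff (.mem 0 1) (.box Fm.bot)) 0 (.hyp (by simp [emptyDef]))
  have mem_univ : Prf [.eq 1 0, emptyDef, univDef] (.mem 0 1) :=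
    .impE (.andE2 mem_univ_iff) (.impE .ax1 (.refl 0))
  have mem_empty : Prf [.eq 1 0, emptyDef, univDef] (.mem 0 0) :=
    .eqSubst (A := .mem 1 0) 1 0 (.hyp (by simp)) mem_univ
  exact .impE (.andE1 mem_empty_iff) mem_empty

end CC
end

section
/- The formula (∀x)(x ∈ ω → Sx ∈ ω) is provable in CC″. -/
/-!
Deep embedding of CC″: Weaver's system CC ("Constructive Concepts")
extended by definitions with a constant 0, a unary function symbol S and a
constant ω, satisfying
  r ∈ 0 ↔ □⊥,
  r ∈ Sx ↔ □(r = x),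
  r ∈ ω ↔ □(∀z)[(0 ∈ z ∧ (∀x)(x ∈ z → Sx ∈ z)) → r ∈ z].

The language is the first-order language of set theory (∈ and =) with the
extra function symbols, augmented by a unary operator □.  Variables are de
Bruijn indices.  ⊥ is the defined formula (∀x,y)(x ∈ y) and ¬A abbreviates
A → ⊥.  CC consists of intuitionistic predicate calculus with equality,
the modal axiom schemes (1)–(6), the deduction rule inferring A from □A
(for theorems), extensionality, and the comprehension scheme
(∃x)(∀r)(r ∈ x ↔ □A) with x not free in A.
-/

namespace CC2

/-- Terms of CC″: variables (de Bruijn indices), 0, S, ω. -/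
inductive Tm : Type
  | var : ℕ → Tm
  | zero : Tm
  | succ : Tm → Tm
  | omega : Tm
  deriving DecidableEq

/-- Formulas of CC″. -/
inductive Fm : Type
  | mem : Tm → Tm → Fm      -- s ∈ t
  | eq  : Tm → Tm → Fm      -- s = t
  | and : Fm → Fm → Fm
  | or  : Fm → Fm → Fm
  | imp : Fm → Fm → Fm
  | all : Fm → Fm
  | ex  : Fm → Fm
  | box : Fm → Fm
  deriving DecidableEq

namespace Tm

/-- Lift a term at depth d: free indices ≥ d are incremented. -/
def liftAt (d : ℕ) : Tm → Tm
  | var n => var (if n < d then n else n + 1)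
  | zero => zero
  | succ t => succ (t.liftAt d)
  | omega => omega

/-- Substitute the term s for the de Bruijn index d. -/
def subst (d : ℕ) (s : Tm) : Tm → Tm
  | var n => if n < d then var n else if n = d then s else var (n - 1)
  | zero => zero
  | succ t => succ (subst d s t)
  | omega => omega

end Tm

namespace Fm

/-- ⊥ stands for (∀x,y)(x ∈ y). -/
def bot : Fm := .all (.all (.mem (.var 1) (.var 0)))

/-- ¬A abbreviates A → ⊥. -/
def neg (A : Fm) : Fm := A.imp bot

/-- A ↔ B abbreviates (A → B) ∧ (B → A). -/
def iff (A B : Fm) : Fm := (A.imp B).and (B.imp A)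

/-- Lift a formula at depth d: free indices ≥ d are incremented. -/
def liftAt (d : ℕ) : Fm → Fm
  | mem a b => mem (a.liftAt d) (b.liftAt d)
  | eq a b  => eq (a.liftAt d) (b.liftAt d)
  | and A B => and (A.liftAt d) (B.liftAt d)
  | or A B  => or (A.liftAt d) (B.liftAt d)
  | imp A B => imp (A.liftAt d) (B.liftAt d)
  | all A   => all (A.liftAt (d+1))
  | ex A    => ex (A.liftAt (d+1))
  | box A   => box (A.liftAt d)

/-- Lift a formula (all free indices incremented). -/
def shift : Fm → Fm := liftAt 0

/-- Substitute the term s for the de Bruijn index d. -/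
def subst (d : ℕ) (s : Tm) : Fm → Fm
  | mem a b => mem (Tm.subst d s a) (Tm.subst d s b)
  | eq a b  => eq (Tm.subst d s a) (Tm.subst d s b)
  | and A B => and (A.subst d s) (B.subst d s)
  | or A B  => or (A.subst d s) (B.subst d s)
  | imp A B => imp (A.subst d s) (B.subst d s)
  | all A   => all (A.subst (d+1) (s.liftAt 0))
  | ex A    => ex (A.subst (d+1) (s.liftAt 0))
  | box A   => box (A.subst d s)

end Fm

/-- The extensionality axiom (7): x = y ↔ (∀u)(u ∈ x ↔ u ∈ y)
(universally closed). -/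
def extAx : Fm :=
  .all (.all (Fm.iff (.eq (.var 1) (.var 0))
    (.all (Fm.iff (.mem (.var 0) (.var 2)) (.mem (.var 0) (.var 1))))))

/-- Defining axiom of 0:  (∀r)(r ∈ 0 ↔ □⊥). -/
def zeroAx : Fm := .all (Fm.iff (.mem (.var 0) .zero) (.box Fm.bot))

/-- Defining axiom of S:  (∀r,x)(r ∈ Sx ↔ □(r = x)). -/
def succAx : Fm :=
  .all (.all (Fm.iff (.mem (.var 1) (.succ (.var 0)))
    (.box (.eq (.var 1) (.var 0)))))

/-- Defining axiom of ω:
(∀r)(r ∈ ω ↔ □(∀z)[(0 ∈ z ∧ (∀x)(x ∈ z → Sx ∈ z)) → r ∈ z]). -/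
def omegaAx : Fm :=
  .all (Fm.iff (.mem (.var 0) .omega)
    (.box (.all (.imp
      (.and (.mem .zero (.var 0))
        (.all (.imp (.mem (.var 0) (.var 1))
          (.mem (.succ (.var 0)) (.var 1)))))
      (.mem (.var 1) (.var 0))))))

/-- Derivability in CC″ from a list of hypotheses: intuitionistic natural
deduction with equality (with ex falso for the defined ⊥), the modal axioms
(1)–(6), the rule inferring A from □A (for theorems), extensionality, the
comprehension scheme, and the defining axioms of 0, S, ω.  In `compr` the
formula A has de Bruijn index 0 as the fixed variable r; lifting at 1
guarantees that the comprehension variable x does not occur freely in A. -/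
inductive Prf : List Fm → Fm → Prop
  | hyp {Γ : List Fm} {A : Fm} : A ∈ Γ → Prf Γ A
  | andI {Γ : List Fm} {A B : Fm} : Prf Γ A → Prf Γ B → Prf Γ (.and A B)
  | andE1 {Γ : List Fm} {A B : Fm} : Prf Γ (.and A B) → Prf Γ A
  | andE2 {Γ : List Fm} {A B : Fm} : Prf Γ (.and A B) → Prf Γ B
  | orI1 {Γ : List Fm} {A B : Fm} : Prf Γ A → Prf Γ (.or A B)
  | orI2 {Γ : List Fm} {A B : Fm} : Prf Γ B → Prf Γ (.or A B)
  | orE {Γ : List Fm} {A B C : Fm} :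
      Prf Γ (.or A B) → Prf (A :: Γ) C → Prf (B :: Γ) C → Prf Γ C
  | impI {Γ : List Fm} {A B : Fm} : Prf (A :: Γ) B → Prf Γ (.imp A B)
  | impE {Γ : List Fm} {A B : Fm} : Prf Γ (.imp A B) → Prf Γ A → Prf Γ B
  | exfalso {Γ : List Fm} {A : Fm} : Prf Γ Fm.bot → Prf Γ A
  | allI {Γ : List Fm} {A : Fm} : Prf (Γ.map Fm.shift) A → Prf Γ (.all A)
  | allE {Γ : List Fm} {A : Fm} (t : Tm) : Prf Γ (.all A) → Prf Γ (A.subst 0 t)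
  | exI {Γ : List Fm} {A : Fm} (t : Tm) : Prf Γ (A.subst 0 t) → Prf Γ (.ex A)
  | exE {Γ : List Fm} {A B : Fm} :
      Prf Γ (.ex A) → Prf (A :: Γ.map Fm.shift) B.shift → Prf Γ B
  | refl {Γ : List Fm} (t : Tm) : Prf Γ (.eq t t)
  | eqSubst {Γ : List Fm} {A : Fm} (s t : Tm) :
      Prf Γ (.eq s t) → Prf Γ (A.subst 0 s) → Prf Γ (A.subst 0 t)
  | ax1 {Γ : List Fm} {A : Fm} : Prf Γ (A.imp (.box A))
  | ax2 {Γ : List Fm} {A B : Fm} :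
      Prf Γ (Fm.iff (.box (.and A B)) (.and (.box A) (.box B)))
  | ax3 {Γ : List Fm} {A B : Fm} :
      Prf Γ (Fm.iff (.box (.or A B)) (.or (.box A) (.box B)))
  | ax4 {Γ : List Fm} {A : Fm} : Prf Γ (Fm.iff (.box (.ex A)) (.ex (.box A)))
  | ax5 {Γ : List Fm} {A : Fm} : Prf Γ (Fm.iff (.box (.all A)) (.all (.box A)))
  | ax6 {Γ : List Fm} {A B : Fm} :
      Prf Γ ((Fm.box (A.imp B)).imp ((Fm.box A).imp (.box B)))
  | boxE {A : Fm} : Prf [] (.box A) → Prf [] A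
  | ext {Γ : List Fm} : Prf Γ extAx
  | compr {Γ : List Fm} (A : Fm) :
      Prf Γ (.ex (.all (Fm.iff (.mem (.var 0) (.var 1)) (.box (A.liftAt 1)))))
  | ax0 {Γ : List Fm} : Prf Γ zeroAx
  | axS {Γ : List Fm} : Prf Γ succAx
  | axW {Γ : List Fm} : Prf Γ omegaAx

end CC2

namespace CC2

/-- The formula (∀z)[(0 ∈ z ∧ (∀x)(x ∈ z → Sx ∈ z)) → t ∈ z]: the term `t` belongs to every
inductive concept. -/
def inAllInductive (t : Tm) : Fm :=
  .all (.imp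
    (.and (.mem .zero (.var 0))
      (.all (.imp (.mem (.var 0) (.var 1)) (.mem (.succ (.var 0)) (.var 1)))))
    (.mem (t.liftAt 0) (.var 0)))

/-- The defining axiom of ω, instantiated at the term `t`. -/
theorem Prf.mem_omega_iff {Γ : List Fm} (t : Tm) :
    Prf Γ (Fm.iff (.mem t .omega) (.box (inAllInductive t))) :=
  Prf.allE t Prf.axW

/-- If a variable belongs to every inductive concept, then so does its successor. -/
theorem Prf.inAllInductive_succ {Γ : List Fm} (n : ℕ) :
    Prf Γ ((inAllInductive (.var n)).imp (inAllInductive (.succ (.var n)))) := by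
  refine .impI (.allI (.impI ?_))
  have inductive_z := Prf.hyp (List.mem_cons_self (a := Fm.and (.mem .zero (.var 0))
      (.all (.imp (.mem (.var 0) (.var 1)) (.mem (.succ (.var 0)) (.var 1)))))
    (l := ((inAllInductive (.var n)) :: Γ).map Fm.shift))
  have mem_z := Prf.impE (Prf.allE (.var 0) (Prf.hyp
    (List.mem_cons_of_mem _ List.mem_cons_self))) inductive_z
  exact Prf.impE (Prf.allE (.var (n + 1)) (Prf.andE2 inductive_z)) mem_z

/-- The formula (∀x)(x ∈ ω → Sx ∈ ω) is provable in CC″. -/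
theorem succ_mem_omega :
    Prf [] (.all (.imp (.mem (.var 0) .omega)
      (.mem (.succ (.var 0)) .omega))) := by
  refine .allI (.impI (.impE (.andE2 (Prf.mem_omega_iff (.succ (.var 0)))) ?_))
  refine .impE (.impE .ax6 (.impE .ax1 (Prf.inAllInductive_succ 0))) ?_
  exact .impE (.andE1 (Prf.mem_omega_iff (.var 0))) (.hyp List.mem_cons_self)
end CC2
end

section
/- The formula (∀x)(Sx = 0 → □⊥) is provable in CC″. -/
namespace CC2

/-- Every variable is an element of its successor. -/
theorem mem_succ_self_var (Γ : List Fm) (n : ℕ) :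
    Prf Γ (.mem (.var n) (.succ (.var n))) := by
  have h : Prf Γ (Fm.iff (.mem (.var n) (.succ (.var n))) (.box (.eq (.var n) (.var n)))) :=
    .allE (.var n) (.allE (.var n) .axS)
  exact .impE (.andE2 h) (.impE .ax1 (.refl _))

/-- An element of 0 yields □⊥. -/
theorem box_bot_of_mem_zero {Γ : List Fm} {t : Tm} (h : Prf Γ (.mem t .zero)) :
    Prf Γ (.box Fm.bot) := by
  have h0 : Prf Γ (Fm.iff (.mem t .zero) (.box Fm.bot)) := .allE t .ax0
  exact .impE (.andE1 h0) h

/-- The formula (∀x)(Sx = 0 → □⊥) is provable in CC″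
(here ⊥ stands for (∀x,y)(x ∈ y)). -/
theorem succ_ne_zero :
    Prf [] (.all (.imp (.eq (.succ (.var 0)) .zero) (.box Fm.bot))) := by
  refine .allI (.impI (box_bot_of_mem_zero (t := .var 0) ?_))
  exact .eqSubst (A := .mem (.var 1) (.var 0)) (.succ (.var 0)) .zero (.hyp (by simp))
    (mem_succ_self_var _ 0)
end CC2
end

section
/- The boxed induction formula (∀z)[(0 ∈ z ∧ (∀x)(x ∈ z → Sx ∈ z)) → (∀y)(y ∈ ω → □(y ∈ z))] is provable in CC″. -/
namespace CC2
/-- If `y ∈ ω` and `z` contains 0 and is closed under S, then `□(y ∈ z)`; here `y` is the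
variable of index 0 and `z` the variable of index 1. -/
theorem Prf.box_mem_of_mem_omega {Γ : List Fm} (mem_omega : Prf Γ (.mem (.var 0) .omega))
    (inductive_z : Prf Γ (.and (.mem .zero (.var 1))
      (.all (.imp (.mem (.var 0) (.var 2)) (.mem (.succ (.var 0)) (.var 2)))))) :
    Prf Γ (.box (.mem (.var 0) (.var 1))) :=
  have box_all := Prf.impE (.andE1 (.allE (.var 0) .axW)) mem_omega
  have box_imp := Prf.allE (.var 1) (.impE (.andE1 .ax5) box_all)
  .impE (.impE .ax6 box_imp) (.impE .ax1 inductive_z)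

/-- The boxed induction formula
(∀z)[(0 ∈ z ∧ (∀x)(x ∈ z → Sx ∈ z)) → (∀y)(y ∈ ω → □(y ∈ z))]
is provable in CC″. -/
theorem boxed_induction :
    Prf [] (.all (.imp
      (.and (.mem .zero (.var 0))
        (.all (.imp (.mem (.var 0) (.var 1))
          (.mem (.succ (.var 0)) (.var 1)))))
      (.all (.imp (.mem (.var 0) .omega)
        (.box (.mem (.var 0) (.var 1))))))) := by
  exact .allI (.impI (.allI (.impI (.box_mem_of_mem_omega
    (.hyp List.mem_cons_self) (.hyp (List.mem_cons_of_mem _ List.mem_cons_self))))))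
end CC2
end
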